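/- arXiv:2205.09686 — 2 statements merged into one kernel-verified Lean document; each statement's English description precedes it below -/
import Mathlib

section
/- For every integer n ≥ 1, the number of Dyck paths D of semilength n with L(D) = 1 equals the (n-1)-st Motzkin number, i.e. |D_n^1| = M_{n-1}. -/
/-- A Dyck path of semilength `n`, encoded as a word on `Bool`
(`true` = up step `u`, `false` = down step `d`). -/
def IsDyckWord (n : ℕ) (w : List Bool) : Prop :=
  w.length = 2 * n ∧ w.count true = n ∧ w.count false = n ∧
    ∀ p : List Bool, p <+: w → p.count false ≤ p.count true

/-- The (0-based) indices of the up steps of `w`. -/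
def upIdxs (w : List Bool) : List ℕ := w.findIdxs (· == true)

/-- The (0-based) indices of the down steps of `w`. -/
def downIdxs (w : List Bool) : List ℕ := w.findIdxs (· == false)

/-- `rStat w i` is the number of `d`'s strictly between the `i`-th and the
`(i+1)`-st `u` of `w` (with `i` 1-indexed). -/
def rStat (w : List Bool) (i : ℕ) : ℕ :=
  ((w.take ((upIdxs w).getD i 0)).drop ((upIdxs w).getD (i - 1) 0 + 1)).count false

/-- `sStat w i` is the number of `u`'s strictly between the `i`-th and the
`(i+1)`-st `d` of `w` (with `i` 1-indexed). -/
def sStat (w : List Bool) (i : ℕ) : ℕ :=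
  ((w.take ((downIdxs w).getD i 0)).drop ((downIdxs w).getD (i - 1) 0 + 1)).count true

/-- The statistic `L(D) = ∏_{i=1}^{n-1} C(r_i + s_i, r_i)` of a Dyck path of semilength `n`. -/
def LStat (n : ℕ) (w : List Bool) : ℕ :=
  ∏ i ∈ Finset.Icc 1 (n - 1), Nat.choose (rStat w i + sStat w i) (rStat w i)

/-- `dyckL n k` = the set `𝒟ₙᵏ` of Dyck paths of semilength `n` with `L(D) = k`. -/
def dyckL (n k : ℕ) : Set (List Bool) := {w | IsDyckWord n w ∧ LStat n w = k}

/-- A Motzkin path, encoded as a word on `Option Bool`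
(`some true` = up, `some false` = down, `none` = horizontal). -/
def IsMotzkinWord (w : List (Option Bool)) : Prop :=
  w.count (some false) = w.count (some true) ∧
    ∀ p : List (Option Bool), p <+: w → p.count (some false) ≤ p.count (some true)

/-- `motzkin n` = the `n`-th Motzkin number `Mₙ`, the number of Motzkin paths of length `n`. -/
noncomputable def motzkin (n : ℕ) : ℕ :=
  {w : List (Option Bool) | w.length = n ∧ IsMotzkinWord w}.ncard

/-- The Motzkin ballot number `T_{n,k}`: the number of Motzkin paths of length `n`
whose first down step is in position `k` (1-indexed); by convention `T_{k-1,k} = 1`,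
counting the path of `k-1` horizontal steps. -/
noncomputable def motzkinBallot (n k : ℕ) : ℕ :=
  if n + 1 = k then 1
  else
    {w : List (Option Bool) | w.length = n ∧ IsMotzkinWord w ∧
      w.getD (k - 1) none = some false ∧ ∀ j < k - 1, w.getD j none ≠ some false}.ncard

/-- Motzkin numbers with integer index: `Mᵢ = 0` for `i < 0`. -/
noncomputable def motzkinZ (i : ℤ) : ℤ := if 0 ≤ i then (motzkin i.toNat : ℤ) else 0

/-- Motzkin ballot numbers with integer first index: `T_{n,k} = 0` for `n < 0`. -/
noncomputable def motzkinBallotZ (n : ℤ) (k : ℕ) : ℤ :=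
  if 0 ≤ n then (motzkinBallot n.toNat k : ℤ) else 0

/-- The set of returns of a Dyck path `w` of semilength `n`:
indices `1 ≤ k ≤ n` such that the path touches the `x`-axis after `2k` steps. -/
def returns (n : ℕ) (w : List Bool) : Finset ℕ :=
  (Finset.Icc 1 n).filter fun k => (w.take (2 * k)).count false = (w.take (2 * k)).count true

/-- `dyckRS n r s` = the set `𝒟ₙ^{r,s}` of Dyck paths of semilength `n` having exactly one
index `i` with `rᵢ > 0` and `sᵢ > 0`, and such that at that index `rᵢ = r` and `sᵢ = s`. -/
def dyckRS (n r s : ℕ) : Set (List Bool) :=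
  {w | IsDyckWord n w ∧ ∃ i ∈ Finset.Icc 1 (n - 1),
    (0 < rStat w i ∧ 0 < sStat w i) ∧ rStat w i = r ∧ sStat w i = s ∧
      ∀ j ∈ Finset.Icc 1 (n - 1), 0 < rStat w j ∧ 0 < sStat w j → j = i}

/-- `twoStars n w k₁ k₂` says that `k₁ < k₂` are exactly the two indices `i` of `w`
with `rᵢ > 0` and `sᵢ > 0`. -/
def twoStars (n : ℕ) (w : List Bool) (k₁ k₂ : ℕ) : Prop :=
  k₁ ∈ Finset.Icc 1 (n - 1) ∧ k₂ ∈ Finset.Icc 1 (n - 1) ∧ k₁ < k₂ ∧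
    (0 < rStat w k₁ ∧ 0 < sStat w k₁) ∧ (0 < rStat w k₂ ∧ 0 < sStat w k₂) ∧
    ∀ j ∈ Finset.Icc 1 (n - 1), 0 < rStat w j ∧ 0 < sStat w j → j = k₁ ∨ j = k₂

/-- `xStat w k` = the number of indices `i < k` with `rᵢ = 0` and `sᵢ > 0`. -/
def xStat (w : List Bool) (k : ℕ) : ℕ :=
  ((Finset.Ico 1 k).filter fun i => rStat w i = 0 ∧ 0 < sStat w i).card

/-- `yStat w k` = the number of indices `i < k` with `rᵢ > 0` and `sᵢ = 0`. -/
def yStat (w : List Bool) (k : ℕ) : ℕ :=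
  ((Finset.Ico 1 k).filter fun i => 0 < rStat w i ∧ sStat w i = 0).card

/-- The generating function `m(x) = Σ Mₙ xⁿ` of the Motzkin numbers, over `ℚ`. -/
noncomputable def motzkinGF : PowerSeries ℚ := PowerSeries.mk fun n => (motzkin n : ℚ)

/-!
For `1 ≤ i < n` let `xᵢ` record whether the `i`-th `u` of a Dyck path is followed by a `d`, and `yᵢ`
whether its `i`-th `d` is followed by a `u`. Reading the path from left to right, these bits always
tell the next letter, so they determine the path. They can be prescribed freely, except that there
must be as many `1`s among the `xᵢ` as among the `yᵢ`, and that the `j`-th valley must not lie below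
the axis, which says that the `j`-th `1` of `y` comes no later than the `j`-th `1` of `x`. Since
`rᵢ > 0` iff `xᵢ = 1` and `sᵢ > 0` iff `yᵢ = 1`, the equation `L(D) = 1` says that `xᵢ` and `yᵢ` are
never both `1`. Such pairs of sequences are the Motzkin paths of length `n - 1` whose `i`-th step is
down if `xᵢ = 1`, up if `yᵢ = 1`, and horizontal otherwise.
-/

section Gaps

variable {c : Bool} {w : List Bool} {i : ℕ}

lemma getD_findIdxs_cons_of_neg {α : Type*} (p : α → Bool) {a : α} {l : List α} {i : ℕ}
    (ha : ¬p a) (hi : i < l.countP p) :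
    ((a :: l).findIdxs p).getD i 0 = (l.findIdxs p).getD i 0 + 1 := by
  have hlen : i < (l.findIdxs p).length := by simpa using hi
  rw [List.findIdxs_cons, if_neg ha, List.findIdxs_start]
  simp [List.getD_eq_getElem?_getD, List.getElem?_eq_getElem hlen]

lemma getD_findIdxs_cons_succ_of_pos {α : Type*} (p : α → Bool) {a : α} {l : List α} {i : ℕ}
    (ha : p a) (hi : i < l.countP p) :
    ((a :: l).findIdxs p).getD (i + 1) 0 = (l.findIdxs p).getD i 0 + 1 := by
  have hlen : i < (l.findIdxs p).length := by simpa using hi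
  rw [List.findIdxs_cons, if_pos ha, List.findIdxs_start]
  simp [List.getD_eq_getElem?_getD, List.getElem?_eq_getElem hlen]

/-- The number of letters `!c` between the occurrences of `c` number `i` and `i + 1` in `w`, where
the occurrences are numbered from `0`. It treats `rStat` and `sStat` uniformly. -/
def gapCount (c : Bool) (w : List Bool) (i : ℕ) : ℕ :=
  ((w.take ((w.findIdxs (· == c)).getD (i + 1) 0)).drop
    ((w.findIdxs (· == c)).getD i 0 + 1)).count (!c)

lemma rStat_succ (w : List Bool) (i : ℕ) : rStat w (i + 1) = gapCount true w i := rfl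

lemma sStat_succ (w : List Bool) (i : ℕ) : sStat w (i + 1) = gapCount false w i := rfl

lemma gapCount_cons_of_ne {b : Bool} (hb : b ≠ c) (hi : i + 1 < w.count c) :
    gapCount c (b :: w) i = gapCount c w i := by
  have hbeq : ¬(b == c) = true := by simpa using hb
  rw [gapCount, gapCount, getD_findIdxs_cons_of_neg (· == c) hbeq hi,
    getD_findIdxs_cons_of_neg (· == c) hbeq (Nat.lt_of_succ_lt hi), List.take_succ_cons,
    List.drop_succ_cons]

lemma gapCount_cons_self_succ (hi : i + 1 < w.count c) :
    gapCount c (c :: w) (i + 1) = gapCount c w i := by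
  have heq : (c == c) = true := beq_self_eq_true c
  rw [gapCount, gapCount, getD_findIdxs_cons_succ_of_pos (· == c) heq hi,
    getD_findIdxs_cons_succ_of_pos (· == c) heq (Nat.lt_of_succ_lt hi), List.take_succ_cons,
    List.drop_succ_cons]

lemma gapCount_cons_self_zero_pos_iff (hc : c ∈ w) :
    0 < gapCount c (c :: w) 0 ↔ w.head? = some (!c) := by
  have hcount : 0 < w.count c := List.count_pos_iff.2 hc
  have hgap : gapCount c (c :: w) 0 =
      (w.take ((w.findIdxs (· == c)).getD 0 0)).count (!c) := by
    rw [gapCount, getD_findIdxs_cons_succ_of_pos (· == c) (beq_self_eq_true c) hcount]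
    simp [List.findIdxs_cons]
  rw [hgap]
  rcases w with _ | ⟨b, w⟩
  · simp at hc
  · obtain rfl | rfl := Bool.eq_or_eq_not b c
    · simp [List.findIdxs_cons]
    · have hw : 0 < w.count c := by simpa using hcount
      rw [getD_findIdxs_cons_of_neg (· == c) (by simp) hw]
      simp

end Gaps

section Switches

variable {c : Bool} {w : List Bool}

/-- For each occurrence of the letter `c` in `w` except the last one, in order, whether it is
followed by the opposite letter. -/
def switches (c : Bool) (w : List Bool) : List Bool :=
  (List.range (w.count c - 1)).map fun i => decide (0 < gapCount c w i)

lemma switches_cons_of_ne {b : Bool} (hb : b ≠ c) : switches c (b :: w) = switches c w := by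
  rw [switches, switches, List.count_cons_of_ne hb]
  refine List.map_congr_left fun i hi => ?_
  rw [gapCount_cons_of_ne hb (by rw [List.mem_range] at hi; omega)]

lemma switches_cons_self (hc : c ∈ w) :
    switches c (c :: w) = (w.head? == some (!c)) :: switches c w := by
  obtain ⟨k, hk⟩ := Nat.exists_eq_succ_of_ne_zero (List.count_pos_iff.2 hc).ne'
  rw [switches, switches, List.count_cons_self, hk, Nat.add_sub_cancel, Nat.succ_sub_one,
    List.range_succ_eq_map, List.map_cons, List.map_map]
  congr 1
  · rw [decide_eq_decide.2 (gapCount_cons_self_zero_pos_iff hc)]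
    exact (beq_eq_decide ..).symm
  · refine List.map_congr_left fun i hi => ?_
    rw [List.mem_range] at hi
    simp only [Function.comp_apply, Nat.succ_eq_add_one,
      gapCount_cons_self_succ (c := c) (w := w) (i := i) (by omega)]

lemma switches_replicate_self (c : Bool) (k : ℕ) :
    switches c (List.replicate (k + 1) c) = List.replicate k false := by
  induction k with
  | zero => simp [switches]
  | succ k ih =>
    rw [List.replicate_succ, switches_cons_self (by simp), ih]
    simp [List.replicate_succ]

lemma LStat_succ_eq_one_iff {n : ℕ} (hu : w.count true = n + 1) (hd : w.count false = n + 1) :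
    LStat (n + 1) w = 1 ↔
      List.Forall₂ (fun x y => (x && y) = false) (switches true w) (switches false w) := by
  have hbinom (r s : ℕ) :
      Nat.choose (r + s) r = 1 ↔ (decide (0 < r) && decide (0 < s)) = false := by
    rw [Nat.choose_eq_one_iff]
    simp only [Nat.add_eq_left, Bool.and_eq_false_imp, decide_eq_true_eq, decide_eq_false_iff_not]
    omega
  rw [LStat, switches, switches, hu, hd, Nat.add_sub_cancel, Finset.prod_eq_one_iff,
    List.forall₂_map_left_iff, List.forall₂_map_right_iff, List.forall₂_same]
  simp only [hbinom, List.mem_range, ← rStat_succ, ← sStat_succ]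
  constructor
  · exact fun h i hi => h (i + 1) (Finset.mem_Icc.2 (by omega))
  · intro h i hi
    obtain ⟨hi₁, hi₂⟩ := Finset.mem_Icc.1 hi
    obtain ⟨j, rfl⟩ := Nat.exists_eq_add_of_le' hi₁
    exact h j (by omega)

end Switches

section Weave

variable {c : Bool} {w X Y : List Bool}

/-- The word starting with `c` that has switches `X` at its letters `c` and `Y` at its letters
`!c`. Once `X` is used up only one `c` is left to be written, so all later letters are `!c`. -/
def weave : Bool → List Bool → List Bool → List Bool
  | c, [], Y => c :: List.replicate (Y.length + 1) (!c)
  | c, false :: X, Y => c :: weave c X Y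
  | c, true :: X, Y => c :: weave (!c) Y X
termination_by _ X Y => X.length + Y.length

lemma weave_cons (c x : Bool) (X Y : List Bool) :
    weave c (x :: X) Y = c :: weave (c ^^ x) (bif x then Y else X) (bif x then X else Y) := by
  cases x <;> simp [weave]

/-- The condition for `X` and `Y` to be the switches of a word starting with the letter of `X`:
as the two kinds of switches alternate, starting with one from `X`, their numbers agree or `X` has
one more. -/
def IsWeavable (X Y : List Bool) : Prop :=
  Y.count true ≤ X.count true ∧ X.count true ≤ Y.count true + 1

lemma isWeavable_false_cons : IsWeavable (false :: X) Y ↔ IsWeavable X Y := by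
  simp [IsWeavable]

lemma isWeavable_true_cons : IsWeavable (true :: X) Y ↔ IsWeavable Y X := by
  simp only [IsWeavable, List.count_cons_self]
  omega

lemma head?_weave (c : Bool) (X Y : List Bool) : (weave c X Y).head? = some c := by
  fun_cases weave c X Y <;> rfl

lemma count_weave (c : Bool) (X Y : List Bool) :
    (weave c X Y).count c = X.length + 1 ∧ (weave c X Y).count (!c) = Y.length + 1 := by
  fun_induction weave c X Y with
  | case1 c Y => simp [List.count_replicate]
  | case2 c X Y ih => simpa using ih
  | case3 c X Y ih => simpa using ih.symm

lemma mem_weave (c b : Bool) (X Y : List Bool) : b ∈ weave c X Y := by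
  rw [← List.count_pos_iff]
  obtain rfl | rfl := Bool.eq_or_eq_not b c
  · simp [(count_weave b X Y).1]
  · simp [(count_weave c X Y).2]

lemma switches_weave (c : Bool) (h : IsWeavable X Y) :
    switches c (weave c X Y) = X ∧ switches (!c) (weave c X Y) = Y := by
  fun_induction weave c X Y with
  | case1 c Y =>
    have hY : Y = List.replicate Y.length false := by
      refine List.eq_replicate_of_mem fun y hy => ?_
      have hnot : true ∉ Y := List.count_eq_zero.1 (by simpa using h.1)
      exact Bool.eq_false_iff.2 fun hyt => hnot (hyt ▸ hy)
    rw [switches_cons_of_ne (Bool.self_ne_not c), switches_replicate_self, ← hY]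
    simp [switches, List.count_replicate]
  | case2 c X Y ih =>
    obtain ⟨hX, hY⟩ := ih (isWeavable_false_cons.1 h)
    rw [switches_cons_self (mem_weave ..), switches_cons_of_ne (Bool.self_ne_not c), hX, hY,
      head?_weave]
    simp
  | case3 c X Y ih =>
    obtain ⟨hY, hX⟩ := ih (isWeavable_true_cons.1 h)
    rw [Bool.not_not] at hX
    rw [switches_cons_self (mem_weave ..), switches_cons_of_ne (Bool.self_ne_not c), hX, hY,
      head?_weave]
    simp

lemma exists_weave_eq_cons (c : Bool) (hw : (!c) ∈ w) :
    ∃ X Y, IsWeavable X Y ∧ weave c X Y = c :: w := by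
  induction w generalizing c with
  | nil => simp at hw
  | cons b w ih =>
    obtain rfl | rfl := Bool.eq_or_eq_not b c
    · obtain ⟨X, Y, hXY, hweave⟩ := ih b (by simpa using hw)
      exact ⟨false :: X, Y, isWeavable_false_cons.2 hXY, by rw [weave, hweave]⟩
    · by_cases hc : c ∈ w
      · obtain ⟨Y, X, hYX, hweave⟩ := ih (!c) (by simpa using hc)
        exact ⟨true :: X, Y, isWeavable_true_cons.2 hYX, by rw [weave, hweave]⟩
      · have hw : w = List.replicate w.length (!c) :=
          List.eq_replicate_of_mem fun b hb => Bool.eq_not.2 fun hbc => hc (hbc ▸ hb)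
        refine ⟨[], List.replicate w.length false, by simp [IsWeavable, List.count_replicate], ?_⟩
        rw [weave, List.length_replicate, List.replicate_succ, ← hw]

end Weave

section Nonneg

variable {h : ℕ} {w : List Bool}

/-- The path `w` with up steps `true` and down steps `false` never goes below the axis when it is
started at height `h`. -/
def StaysNonneg (h : ℕ) (w : List Bool) : Prop :=
  ∀ p : List Bool, p <+: w → p.count false ≤ p.count true + h

lemma forall_prefix_cons_iff {α : Type*} {P : List α → Prop} {a : α} {l : List α} :
    (∀ p, p <+: a :: l → P p) ↔ P [] ∧ ∀ p, p <+: l → P (a :: p) := by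
  simp only [List.prefix_cons_iff]
  grind

lemma staysNonneg_true_cons : StaysNonneg h (true :: w) ↔ StaysNonneg (h + 1) w := by
  simp [StaysNonneg, forall_prefix_cons_iff, add_right_comm, add_assoc]

lemma staysNonneg_succ_false_cons : StaysNonneg (h + 1) (false :: w) ↔ StaysNonneg h w := by
  simp [StaysNonneg, forall_prefix_cons_iff, ← add_assoc]

lemma not_staysNonneg_zero_false_cons : ¬StaysNonneg 0 (false :: w) := fun H => by
  simpa using H [false] (by simp)

lemma staysNonneg_replicate_false (h : ℕ) : StaysNonneg h (List.replicate h false) := by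
  intro p hp
  calc p.count false ≤ p.length := List.count_le_length
    _ ≤ (List.replicate h false).length := hp.length_le
    _ ≤ p.count true + h := by simp

lemma count_true_cons (b : Bool) (l : List Bool) :
    (b :: l).count true = b.toNat + l.count true := by
  cases b <;> simp [add_comm]

/-- The letter `c` and the height `h` are there for the induction. For `c = true` and `h = 0` the
condition says that the `j`-th `true` of `D` is at most as far right as that of `U`; their positions
are the numbers of `d`'s and `u`'s before the `j`-th valley. For `c = false` the summand `1` stands
for a peak just before the word. -/
lemma staysNonneg_weave_iff : ∀ (c : Bool) (U D : List Bool) (h : ℕ), U.length + h = D.length →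
    (StaysNonneg h (weave c (bif c then U else D) (bif c then D else U)) ↔
      ∀ t ≤ U.length, (!c).toNat + (U.take t).count true ≤ (D.take (t + h)).count true)
  | true, [], D, h, hlen => by
    obtain rfl : h = D.length := by simpa using hlen
    simpa [weave, staysNonneg_true_cons] using staysNonneg_replicate_false _
  | true, x :: U, D, h, hlen => by
    have hlen' : U.length + (h + 1) = D.length := by
      rw [← hlen, List.length_cons, add_assoc, add_comm 1]
    rw [cond_true, cond_true, weave_cons, staysNonneg_true_cons, Bool.true_xor,
      ← Bool.cond_not x U D, ← Bool.cond_not x D U, staysNonneg_weave_iff (!x) U D (h + 1) hlen',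
      Bool.not_not]
    have hstep (t : ℕ) : x.toNat + (U.take t).count true ≤ (D.take (t + (h + 1))).count true ↔
        (!true).toNat + ((x :: U).take (t + 1)).count true ≤ (D.take (t + 1 + h)).count true := by
      rw [List.take_succ_cons, count_true_cons, Bool.not_true, Bool.toNat_false, zero_add,
        add_right_comm, add_assoc]
    constructor
    · rintro H (_ | t) ht
      · simp
      · exact (hstep t).1 (H t (Nat.le_of_succ_le_succ ht))
    · exact fun H t ht => (hstep t).2 (H (t + 1) (Nat.succ_le_succ ht))
  | false, U, [], h, hlen => by
    obtain ⟨rfl, rfl⟩ : U = [] ∧ h = 0 := by simpa using hlen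
    simp [weave, not_staysNonneg_zero_false_cons]
  | false, U, y :: D, 0, _ => by
    refine iff_of_false ?_ fun H => by simpa using H 0
    rw [cond_false, cond_false, weave_cons]
    exact not_staysNonneg_zero_false_cons
  | false, U, y :: D, h + 1, hlen => by
    have hlen' : U.length + h = D.length := by simpa [← add_assoc] using hlen
    rw [cond_false, cond_false, weave_cons, staysNonneg_succ_false_cons, Bool.false_xor,
      staysNonneg_weave_iff y U D h hlen']
    refine forall₂_congr fun t _ => ?_
    rw [← add_assoc, List.take_succ_cons, count_true_cons]
    cases y <;> simp
termination_by _ U D => U.length + D.length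

end Nonneg

section Motzkin

/-- The Dyck path encoded by a Motzkin path `m`: for `i ≤ m.length`, its `i`-th `u` is followed by
`d` iff the `i`-th step of `m` is down, and its `i`-th `d` is followed by `u` iff the `i`-th step of
`m` is up. -/
def dyckOfMotzkin (m : List (Option Bool)) : List Bool :=
  weave true (m.map (· == some false)) (m.map (· == some true))

lemma count_true_map_beq {α : Type*} [BEq α] (l : List α) (a : α) :
    (l.map (· == a)).count true = l.count a := by
  rw [List.count, List.countP_map, List.count]
  simp [Function.comp_def]

lemma staysNonneg_dyckOfMotzkin_iff (m : List (Option Bool)) :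
    StaysNonneg 0 (dyckOfMotzkin m) ↔
      ∀ p : List (Option Bool), p <+: m → p.count (some false) ≤ p.count (some true) := by
  have hweave := staysNonneg_weave_iff true (m.map (· == some false)) (m.map (· == some true)) 0
    (by simp)
  rw [cond_true, cond_true, ← dyckOfMotzkin] at hweave
  rw [hweave]
  simp only [Bool.not_true, Bool.toNat_false, zero_add, add_zero, List.length_map,
    ← List.map_take, count_true_map_beq]
  constructor
  · intro H p hp
    rw [List.prefix_iff_eq_take.1 hp]
    exact H _ hp.length_le
  · exact fun H t _ => H _ (List.take_prefix t m)

lemma isDyckWord_dyckOfMotzkin_iff (m : List (Option Bool)) :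
    IsDyckWord (m.length + 1) (dyckOfMotzkin m) ↔
      ∀ p : List (Option Bool), p <+: m → p.count (some false) ≤ p.count (some true) := by
  have hcount := count_weave true (m.map (· == some false)) (m.map (· == some true))
  rw [List.length_map, List.length_map, ← dyckOfMotzkin, Bool.not_true] at hcount
  have hlen : (dyckOfMotzkin m).length = 2 * (m.length + 1) := by
    rw [← List.count_true_add_count_false, hcount.1, hcount.2, two_mul]
  rw [← staysNonneg_dyckOfMotzkin_iff]
  exact ⟨fun hw => hw.2.2.2, fun hw => ⟨hlen, hcount.1, hcount.2, hw⟩⟩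

lemma IsMotzkinWord.switches_dyckOfMotzkin {m : List (Option Bool)} (hm : IsMotzkinWord m) :
    switches true (dyckOfMotzkin m) = m.map (· == some false) ∧
      switches false (dyckOfMotzkin m) = m.map (· == some true) := by
  apply switches_weave
  simp [IsWeavable, count_true_map_beq, hm.1]

lemma eq_of_map_beq_eq {m m' : List (Option Bool)}
    (hd : m.map (· == some false) = m'.map (· == some false))
    (hu : m.map (· == some true) = m'.map (· == some true)) : m = m' := by
  have hinj : Function.Injective fun a : Option Bool => (a == some false, a == some true) := by
    decide
  refine List.map_injective_iff.2 hinj ?_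
  rw [← List.zip_map', ← List.zip_map', hd, hu]

lemma injOn_dyckOfMotzkin : Set.InjOn dyckOfMotzkin {m | IsMotzkinWord m} := by
  intro m hm m' hm' h
  obtain ⟨hu, hd⟩ := hm.switches_dyckOfMotzkin
  obtain ⟨hu', hd'⟩ := hm'.switches_dyckOfMotzkin
  rw [h] at hu hd
  exact eq_of_map_beq_eq (hu.symm.trans hu') (hd.symm.trans hd')

lemma exists_map_beq_of_forall₂ {X Y : List Bool}
    (h : List.Forall₂ (fun x y => (x && y) = false) X Y) :
    ∃ m : List (Option Bool), m.map (· == some false) = X ∧ m.map (· == some true) = Y := by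
  induction h with
  | nil => exact ⟨[], rfl, rfl⟩
  | @cons x y X Y hxy _ ih =>
    obtain ⟨m, rfl, rfl⟩ := ih
    cases x <;> cases y
    · exact ⟨none :: m, rfl, rfl⟩
    · exact ⟨some true :: m, rfl, rfl⟩
    · exact ⟨some false :: m, rfl, rfl⟩
    · simp at hxy

lemma IsDyckWord.exists_eq_true_cons {n : ℕ} {w : List Bool} (hw : IsDyckWord (n + 1) w) :
    ∃ v, false ∈ v ∧ w = true :: v := by
  obtain ⟨hlen, -, hd, hpre⟩ := hw
  rcases w with _ | ⟨_ | _, v⟩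
  · simp at hlen
  · exact absurd (hpre [false] (by simp)) (by simp)
  · rw [List.count_cons_of_ne (by decide)] at hd
    exact ⟨v, List.count_pos_iff.1 (hd ▸ n.succ_pos), rfl⟩

lemma mapsTo_dyckOfMotzkin (n : ℕ) :
    Set.MapsTo dyckOfMotzkin {m | m.length = n ∧ IsMotzkinWord m} (dyckL (n + 1) 1) := by
  rintro m ⟨rfl, hm⟩
  have hD := (isDyckWord_dyckOfMotzkin_iff m).2 hm.2
  refine ⟨hD, (LStat_succ_eq_one_iff hD.2.1 hD.2.2.1).2 ?_⟩
  rw [hm.switches_dyckOfMotzkin.1, hm.switches_dyckOfMotzkin.2, List.forall₂_map_left_iff,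
    List.forall₂_map_right_iff, List.forall₂_same]
  rintro (_ | _ | _) - <;> rfl

lemma surjOn_dyckOfMotzkin (n : ℕ) :
    Set.SurjOn dyckOfMotzkin {m | m.length = n ∧ IsMotzkinWord m} (dyckL (n + 1) 1) := by
  rintro w ⟨hD, hL⟩
  obtain ⟨v, hv, rfl⟩ := hD.exists_eq_true_cons
  obtain ⟨X, Y, hXY, hweave⟩ := exists_weave_eq_cons true hv
  rw [← hweave] at hD hL ⊢
  obtain ⟨hX, hY⟩ := switches_weave true hXY
  rw [Bool.not_true] at hY
  rw [LStat_succ_eq_one_iff hD.2.1 hD.2.2.1, hX, hY] at hL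
  obtain ⟨m, rfl, rfl⟩ := exists_map_beq_of_forall₂ hL
  have hlen : m.length = n := by
    simpa using (count_weave true _ _).1.symm.trans hD.2.1
  have hpre := (isDyckWord_dyckOfMotzkin_iff m).1 (hlen ▸ hD)
  rw [IsWeavable, count_true_map_beq, count_true_map_beq] at hXY
  exact ⟨m, ⟨hlen, (hpre m (List.prefix_refl m)).antisymm hXY.1, hpre⟩, rfl⟩

lemma bijOn_dyckOfMotzkin (n : ℕ) :
    Set.BijOn dyckOfMotzkin {m | m.length = n ∧ IsMotzkinWord m} (dyckL (n + 1) 1) :=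
  ⟨mapsTo_dyckOfMotzkin n, injOn_dyckOfMotzkin.mono fun _ hm => hm.2, surjOn_dyckOfMotzkin n⟩

end Motzkin

/-- **Theorem (L = 1).** For every `n ≥ 1`, the number of Dyck paths of semilength `n`
with `L(D) = 1` is the `(n-1)`-st Motzkin number. -/
theorem dyck_L_eq_one_count (n : ℕ) (hn : 1 ≤ n) :
    (dyckL n 1).ncard = motzkin (n - 1) := by
  obtain ⟨k, rfl⟩ := Nat.exists_eq_add_of_le' hn
  exact (bijOn_dyckOfMotzkin k).ncard_eq.symm
end

section
/- The generating function L_2(x) = Σ_{n≥0} |D_n^2| x^n satisfies L_2(x) = x^2 + x^4·(x·m(x))′, where m(x) = Σ_{n≥0} M_n x^n and ′ denotes the formal derivative of formal power series. -/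
/-!
Record, for each `i`, whether the `i`-th up step and the `i`-th down step of a Dyck path of
semilength `n + 1` end their runs. The `n` pairs of flags form a bicolored Motzkin path, and this
encoding is a bijection. The numbers `r_i` and `s_i` are both positive exactly when the `i`-th step
is a level step `(true, true)`, so `L = 2` means that there is a single such step and that
`r_i = s_i = 1` there.

Cut the path at this step and reflect the right half. Then `r_i` and `s_i` are computed by the same
rule from the two halves, which end at the same height. If the height is positive, `r_i = s_i = 1`
means that each half arises from a shorter one by inserting an up step at a prescribed place; at
height zero both halves must be empty. Removing the two up steps and the level step leaves a
Motzkin path of length `n - 3` with one of its `n - 2` cut points.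
-/

namespace BicoloredMotzkin

/-- The composition of `l.length + 1` that corresponds to `l`: read `l` from left to right, a part
ends at each `true`, and the last part ends one step after the end of `l`. -/
def runLengths : List Bool → List ℕ
  | [] => [1]
  | true :: l => 1 :: runLengths l
  | false :: l => (runLengths l).modifyHead (· + 1)

theorem length_runLengths (l : List Bool) : (runLengths l).length = l.count true + 1 := by
  induction l with
  | nil => rfl
  | cons a l ih => cases a <;> simp [runLengths, ih]

theorem exists_runLengths_eq_cons (l : List Bool) : ∃ m R, runLengths l = m :: R :=
  List.exists_cons_of_length_eq_add_one (length_runLengths l)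

theorem runLengths_append_true_cons (k l : List Bool) :
    runLengths (k ++ true :: l) = runLengths k ++ runLengths l := by
  induction k with
  | nil => rfl
  | cons a k ih =>
    obtain ⟨m, R, hR⟩ := exists_runLengths_eq_cons k
    cases a <;> simp [runLengths, ih, hR]

theorem runLengths_replicate_false (m : ℕ) :
    runLengths (List.replicate m false) = [m + 1] := by
  induction m with
  | zero => rfl
  | succ m ih => simp [List.replicate_succ, runLengths, ih]

theorem eq_replicate_false {l : List Bool} (h : true ∉ l) :
    l = List.replicate l.length false :=
  List.eq_replicate_of_mem fun _ ha => Bool.eq_false_iff.2 fun e => h (e ▸ ha)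

theorem runLengths_reverse (l : List Bool) : runLengths l.reverse = (runLengths l).reverse := by
  by_cases h : true ∈ l
  · obtain ⟨k, l', rfl⟩ := List.append_of_mem h
    have hk := runLengths_reverse k
    have hl' := runLengths_reverse l'
    simp [runLengths_append_true_cons, hk, hl']
  · rw [eq_replicate_false h]
    simp [runLengths_replicate_false]
termination_by l.length
decreasing_by all_goals simp_all +arith

theorem getD_runLengths_pos {l : List Bool} {j : ℕ} :
    0 < (runLengths l).getD j 0 ↔ j ≤ l.count true := by
  induction l generalizing j with
  | nil => cases j <;> simp [runLengths]
  | cons a l ih =>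
    obtain ⟨m, R, hR⟩ := exists_runLengths_eq_cons l
    rw [hR] at ih
    have hm : 0 < m := (ih (j := 0)).2 (Nat.zero_le _)
    cases a <;> cases j <;> simp [runLengths, hR, hm, ← ih]

/-- Merge two lists of flags into a word. The word starts with `b`, and the flags of `x` (of `y`)
tell, for each letter `b` (each letter `!b`) except the last one, whether the letter ends its run.
The word is meaningful if `x` and `y` are `Compatible`. -/
def interlace : Bool → List Bool → List Bool → List Bool
  | b, [], y => b :: List.replicate (y.length + 1) (!b)
  | b, false :: x, y => b :: interlace b x y
  | b, true :: x, y => b :: interlace (!b) y x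
termination_by _ x y => x.length + y.length

/-- The runs of letters `b` and `!b` with flags `x` and `y` alternate, start with `b` and end with
`false`. -/
def Compatible (b : Bool) (x y : List Bool) : Prop :=
  x.count true + b.toNat = y.count true + 1

section Interlace

variable {b : Bool} {x y : List Bool}

theorem compatible_false_cons : Compatible b (false :: x) y ↔ Compatible b x y := by
  simp [Compatible]

theorem compatible_true_cons : Compatible b (true :: x) y ↔ Compatible (!b) y x := by
  cases b <;> simp [Compatible] <;> omega

theorem Compatible.of_nil (h : Compatible b [] y) :
    b = true ∧ y = List.replicate y.length false := by
  cases b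
  · simp [Compatible] at h
  · exact ⟨rfl, eq_replicate_false (List.count_eq_zero.1 (by simpa [Compatible] using h))⟩

theorem interlace_cons (b a : Bool) (x y : List Bool) :
    interlace b (a :: x) y = b :: if a then interlace (!b) y x else interlace b x y := by
  cases a <;> simp [interlace]

@[simp]
theorem head?_interlace (b : Bool) (x y : List Bool) : (interlace b x y).head? = some b := by
  cases x <;> simp [interlace, interlace_cons]

theorem count_interlace (b : Bool) (x y : List Bool) :
    (interlace b x y).count b = x.length + 1 ∧ (interlace b x y).count (!b) = y.length + 1 := by
  induction b, x, y using interlace.induct <;> simp_all [interlace, List.count_replicate]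

theorem interlace_injective {x' y' : List Bool} (h : Compatible b x y) (h' : Compatible b x' y')
    (e : interlace b x y = interlace b x' y') : x = x' ∧ y = y' := by
  have hx : x.length = x'.length := by
    simpa [count_interlace] using congrArg (List.count b) e
  have hy : y.length = y'.length := by
    simpa [count_interlace] using congrArg (List.count (!b)) e
  induction b, x, y using interlace.induct generalizing x' y' with
  | case1 b y =>
    obtain rfl := List.length_eq_zero_iff.1 hx.symm
    exact ⟨rfl, by rw [h.of_nil.2, h'.of_nil.2, hy]⟩
  | case2 b x y ih =>
    obtain ⟨a, x', rfl⟩ := List.exists_cons_of_length_eq_add_one hx.symm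
    rw [interlace_cons, interlace_cons, List.cons.injEq] at e
    cases a
    · simpa using ih (compatible_false_cons.1 h) (compatible_false_cons.1 h') e.2
        (by simpa using hx) hy
    · simpa using congrArg List.head? e.2
  | case3 b x y ih =>
    obtain ⟨a, x', rfl⟩ := List.exists_cons_of_length_eq_add_one hx.symm
    rw [interlace_cons, interlace_cons, List.cons.injEq] at e
    cases a
    · simpa using congrArg List.head? e.2
    · simpa [and_comm] using ih (compatible_true_cons.1 h) (compatible_true_cons.1 h') e.2 hy
        (by simpa using hx)

theorem exists_append_false_eq_interlace {w : List Bool} (hw : true ∈ w) :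
    ∃ b x y, w ++ [false] = interlace b x y ∧ Compatible b x y := by
  induction w with
  | nil => simp at hw
  | cons c w ih =>
    by_cases ht : true ∈ w
    · obtain ⟨b, x, y, e, h⟩ := ih ht
      rw [List.cons_append, e]
      rcases Bool.eq_or_eq_not b c with rfl | rfl
      · exact ⟨b, false :: x, y, by simp [interlace], compatible_false_cons.2 h⟩
      · exact ⟨c, true :: y, x, by simp [interlace], compatible_true_cons.2 h⟩
    · obtain rfl : c = true := by simpa [ht] using hw
      obtain ⟨m, rfl⟩ : ∃ m, w = List.replicate m false := ⟨_, eq_replicate_false ht⟩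
      refine ⟨true, [], List.replicate m false, ?_, by simp [Compatible, List.count_replicate]⟩
      simp [interlace, List.replicate_succ']

theorem forall_prefix_cons {α : Type*} {P : List α → Prop} {a : α} {l : List α} :
    (∀ p, p <+: a :: l → P p) ↔ P [] ∧ ∀ p, p <+: l → P (a :: p) := by
  simp only [List.prefix_cons_iff]
  grind

theorem forall_prefix_append {α : Type*} {P : List α → Prop} {k l : List α} :
    (∀ p, p <+: k ++ l → P p) ↔ (∀ p, p <+: k → P p) ∧ ∀ p, p <+: l → P (k ++ p) := by
  induction k generalizing P with
  | nil => exact ⟨fun h => ⟨fun p hp => h p (by simp_all), h⟩, fun h => h.2⟩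
  | cons a k ih => simp only [List.cons_append, forall_prefix_cons, ih, and_assoc]

/-- `h` is the height from which the word `interlace b x y` is read. -/
theorem forall_prefix_interlace_iff {h : ℕ} (hc : Compatible b x y)
    (hl : if b then y.length = x.length + h else x.length = y.length + h) :
    (∀ p, p <+: interlace b x y → p.count false ≤ p.count true + h) ↔
      if b then ∀ k, (x.take k).count true ≤ (y.take (k + h)).count true
      else ∀ k, (y.take k).count true + 1 ≤ (x.take (k + h)).count true := by
  induction b, x, y using interlace.induct generalizing h with
  | case1 b y =>
    obtain ⟨rfl, -⟩ := hc.of_nil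
    rw [interlace, forall_prefix_cons]
    refine iff_of_true ⟨by simp, fun p hp => ?_⟩ (by simp)
    have hcount : p.count false ≤ y.length + 1 := by simpa using hp.sublist.count_le false
    have hheight : y.length = h := by simpa using hl
    rw [List.count_cons_of_ne (by simp), List.count_cons_self]
    omega
  | case2 b x y ih =>
    rw [interlace, forall_prefix_cons]
    cases b
    · rcases h with _ | h
      · refine iff_of_false (fun H => ?_) (fun H => ?_)
        · simpa using H.2 [] List.nil_prefix
        · simpa using H 0
      · simpa [← add_assoc, Nat.succ_le_iff] using
          ih (h := h) (compatible_false_cons.1 hc) (by grind)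
    · rw [if_pos rfl, ← Nat.and_forall_add_one]
      simpa [add_right_comm _ 1 h, ← add_assoc] using
        ih (h := h + 1) (compatible_false_cons.1 hc) (by grind)
  | case3 b x y ih =>
    rw [interlace, forall_prefix_cons]
    cases b
    · rcases h with _ | h
      · refine iff_of_false (fun H => ?_) (fun H => ?_)
        · simpa using H.2 [] List.nil_prefix
        · simpa using H 0
      · simpa [← add_assoc] using
          ih (h := h) (compatible_true_cons.1 hc) (by grind)
    · rw [if_pos rfl, ← Nat.and_forall_add_one]
      simpa [add_right_comm _ 1 h, ← add_assoc, Nat.succ_le_iff] using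
        ih (h := h + 1) (compatible_true_cons.1 hc) (by grind)

/-- Some letter `b` of `w`, preceded by exactly `i` letters `b`, and the next letter `b` are
separated by `r` letters `!b`. -/
def HasGap (b : Bool) (w : List Bool) (i r : ℕ) : Prop :=
  ∃ w₁ w₂, w = w₁ ++ b :: (List.replicate r (!b) ++ b :: w₂) ∧ w₁.count b = i

theorem HasGap.cons {c : Bool} {w : List Bool} {i r : ℕ} (h : HasGap b w i r) :
    HasGap b (c :: w) (i + if c = b then 1 else 0) r := by
  obtain ⟨w₁, w₂, rfl, rfl⟩ := h
  exact ⟨c :: w₁, w₂, rfl, by simp [List.count_cons]⟩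

theorem getD_findIdxs_append (b : Bool) (w₁ w₂ : List Bool) :
    ((w₁ ++ b :: w₂).findIdxs (· == b)).getD (w₁.count b) 0 = w₁.length := by
  rw [List.findIdxs_append, List.getD_append_right _ _ _ _ (by simp [List.count])]
  simp [List.count]

theorem HasGap.count_eq {w : List Bool} {i r : ℕ} (h : HasGap b w i r) :
    ((w.take ((w.findIdxs (· == b)).getD (i + 1) 0)).drop
      ((w.findIdxs (· == b)).getD i 0 + 1)).count (!b) = r := by
  obtain ⟨w₁, w₂, rfl, rfl⟩ := h
  have hnext := getD_findIdxs_append b (w₁ ++ b :: List.replicate r (!b)) w₂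
  have hcount : (w₁ ++ b :: List.replicate r (!b)).count b = w₁.count b + 1 := by
    simp [List.count_replicate]
  rw [hcount, List.append_assoc, List.cons_append] at hnext
  rw [hnext, getD_findIdxs_append]
  simp [List.take_append, List.drop_append, List.take_of_length_le, List.drop_eq_nil_of_le]

theorem HasGap.rStat_eq {w : List Bool} {i r : ℕ} (h : HasGap true w i r) :
    rStat w (i + 1) = r :=
  h.count_eq

theorem HasGap.sStat_eq {w : List Bool} {i r : ℕ} (h : HasGap false w i r) :
    sStat w (i + 1) = r :=
  h.count_eq

theorem exists_interlace_eq_replicate_append (b : Bool) (x y : List Bool) :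
    ∃ w, interlace b x y = List.replicate ((runLengths x).getD 0 0) b ++ (!b) :: w := by
  induction x with
  | nil =>
    exact ⟨List.replicate y.length (!b), by simp [interlace, runLengths, List.replicate_succ]⟩
  | cons a x ih =>
    obtain ⟨w, hw⟩ := ih
    obtain ⟨m, R, hR⟩ := exists_runLengths_eq_cons x
    cases a
    · exact ⟨w, by simp_all [interlace, runLengths, List.replicate_succ]⟩
    · obtain ⟨v, hv⟩ := List.head?_eq_some_iff.1 (head?_interlace (!b) y x)
      exact ⟨v, by simp [interlace, runLengths, hv]⟩

theorem hasGap_interlace (b : Bool) (x y : List Bool) (i : ℕ) :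
    (i < x.length → HasGap b (interlace b x y) i
      (if x.getD i false then (runLengths y).getD ((x.take i).count true) 0 else 0)) ∧
    (i < y.length → HasGap (!b) (interlace b x y) i
      (if y.getD i false then (runLengths x).getD ((y.take i).count true + 1) 0 else 0)) := by
  induction b, x, y using interlace.induct generalizing i with
  | case1 b y =>
    refine ⟨by simp, fun hi => ?_⟩
    obtain ⟨k, hk⟩ := Nat.exists_eq_add_of_lt hi
    refine ⟨b :: List.replicate i (!b), List.replicate k (!b), ?_, by simp⟩
    have hy : y.length + 1 = i + (k + 1 + 1) := by omega
    rw [interlace, hy, List.replicate_add]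
    simp [runLengths, List.replicate_succ]
  | case2 b x y ih =>
    obtain ⟨m, R, hR⟩ := exists_runLengths_eq_cons x
    rw [interlace]
    constructor
    · rcases i with _ | i <;> intro hi
      · obtain ⟨w, hw⟩ := List.head?_eq_some_iff.1 (head?_interlace b x y)
        exact ⟨[], w, by simp [hw], rfl⟩
      · simpa using ((ih i).1 (by simpa using hi)).cons (c := b)
    · intro hi
      simpa [runLengths, hR] using ((ih i).2 hi).cons (c := b)
  | case3 b x y ih =>
    rw [interlace]
    constructor
    · rcases i with _ | i <;> intro hi
      · obtain ⟨w, hw⟩ := exists_interlace_eq_replicate_append (!b) y x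
        exact ⟨[], w, by simpa using hw, rfl⟩
      · simpa using ((ih i).2 (by simpa using hi)).cons (c := b)
    · intro hi
      simpa [runLengths] using ((ih i).1 hi).cons (c := b)

end Interlace

theorem prod_eq_irreducible_iff {ι M : Type*} [CommMonoid M] [Subsingleton Mˣ] {s : Finset ι}
    {f : ι → M} {p : M} (hp : Irreducible p) :
    ∏ i ∈ s, f i = p ↔ ∃ i ∈ s, f i = p ∧ ∀ j ∈ s, j ≠ i → f j = 1 := by
  classical
  refine ⟨fun h => ?_, fun ⟨i, hi, hfi, hone⟩ => hfi ▸ Finset.prod_eq_single_of_mem i hi hone⟩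
  induction s using Finset.induction_on with
  | empty => exact absurd (h ▸ isUnit_one) hp.not_isUnit
  | insert a s ha ih =>
    rw [Finset.prod_insert ha] at h
    rcases hp.isUnit_or_isUnit h.symm with hu | hu <;> rw [isUnit_iff_eq_one] at hu
    · obtain ⟨i, hi, hfi, hone⟩ := ih (by simpa [hu] using h)
      exact ⟨i, by simp [hi], hfi, by grind⟩
    · have hone := Finset.prod_eq_one_iff.1 hu
      exact ⟨a, by simp, by simpa [hu] using h, by grind⟩

theorem choose_add_eq_one_iff {r s : ℕ} : (r + s).choose r = 1 ↔ r = 0 ∨ s = 0 := by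
  rw [Nat.choose_eq_one_iff]
  omega

theorem choose_add_eq_two_iff {r s : ℕ} : (r + s).choose r = 2 ↔ r = 1 ∧ s = 1 := by
  refine ⟨fun h => ?_, by rintro ⟨rfl, rfl⟩; rfl⟩
  rcases r with _ | r
  · simp at h
  rcases s with _ | s
  · simp at h
  rw [← add_assoc, Nat.choose_succ_succ'] at h
  have hleft : 0 < (r + 1 + s).choose r := Nat.choose_pos (by omega)
  have hright : 0 < (r + 1 + s).choose (r + 1) := Nat.choose_pos (by omega)
  have hr := Nat.choose_eq_one_iff.1 (show (r + 1 + s).choose r = 1 by omega)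
  have hs := Nat.choose_eq_one_iff.1 (show (r + 1 + s).choose (r + 1) = 1 by omega)
  omega

theorem LStat_succ_eq_two_iff {n : ℕ} {w : List Bool} :
    LStat (n + 1) w = 2 ↔ ∃ i < n, (rStat w (i + 1) = 1 ∧ sStat w (i + 1) = 1) ∧
      ∀ j < n, j ≠ i → rStat w (j + 1) = 0 ∨ sStat w (j + 1) = 0 := by
  rw [LStat, ← Finset.Ico_add_one_right_eq_Icc, Finset.prod_Ico_eq_prod_range,
    prod_eq_irreducible_iff Nat.prime_two.prime.irreducible]
  simp [choose_add_eq_one_iff, choose_add_eq_two_iff, add_comm 1]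

/-- Prefixes of bicolored Motzkin paths: nonnegative lattice paths with the up step `(false, true)`,
the down step `(true, false)` and level steps `(false, false)` and `(true, true)` of two colors.
Hence the height of `l` is `l.countP Prod.snd - l.countP Prod.fst`. -/
def IsMotzkinPrefix (l : List (Bool × Bool)) : Prop :=
  ∀ p, p <+: l → p.countP Prod.fst ≤ p.countP Prod.snd

/-- Bicolored Motzkin paths. -/
def IsBicoloredMotzkin (l : List (Bool × Bool)) : Prop :=
  l.countP Prod.fst = l.countP Prod.snd ∧ IsMotzkinPrefix l

/-- The Dyck path of semilength `l.length + 1` that corresponds to the bicolored Motzkin path `l`: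
the first (the second) flag of the `i`-th step tells whether the `i`-th up step (the `i`-th down
step) of the Dyck path ends its run. -/
def dyckWord (l : List (Bool × Bool)) : List Bool :=
  interlace true (l.map Prod.fst) (l.map Prod.snd)

section DyckWord

variable {l : List (Bool × Bool)}

theorem count_true_map {α : Type*} (f : α → Bool) (k : List α) :
    (k.map f).count true = k.countP f := by
  rw [List.count, List.countP_map]
  congr
  ext
  simp

theorem isMotzkinPrefix_iff_take :
    IsMotzkinPrefix l ↔ ∀ k, (l.take k).countP Prod.fst ≤ (l.take k).countP Prod.snd :=
  ⟨fun h k => h _ (List.take_prefix k l), fun h p hp => by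
    simpa [← List.prefix_iff_eq_take.1 hp] using h p.length⟩

theorem compatible_map :
    Compatible true (l.map Prod.fst) (l.map Prod.snd) ↔
      l.countP Prod.fst = l.countP Prod.snd := by
  simp [Compatible, count_true_map]

theorem isDyckWord_dyckWord_iff (hc : l.countP Prod.fst = l.countP Prod.snd) :
    IsDyckWord (l.length + 1) (dyckWord l) ↔ IsMotzkinPrefix l := by
  obtain ⟨htrue, hfalse⟩ : (dyckWord l).count true = l.length + 1 ∧
      (dyckWord l).count false = l.length + 1 := by
    simpa [dyckWord] using count_interlace true (l.map Prod.fst) (l.map Prod.snd)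
  have hprefix := forall_prefix_interlace_iff (h := 0) (compatible_map.2 hc) (by simp)
  have hlength := List.count_true_add_count_false (l := dyckWord l)
  simp only [← List.map_take, count_true_map, if_true, add_zero] at hprefix
  rw [isMotzkinPrefix_iff_take, ← hprefix, IsDyckWord]
  exact ⟨fun h => h.2.2.2, fun h => ⟨by omega, htrue, hfalse, h⟩⟩

theorem exists_append_false_of_isDyckWord {n : ℕ} {w : List Bool} (hw : IsDyckWord (n + 1) w) :
    ∃ v, w = v ++ [false] ∧ v.count true = n + 1 := by
  obtain ⟨-, htrue, hfalse, hprefix⟩ := hw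
  rcases w.eq_nil_or_concat with rfl | ⟨v, b, rfl⟩
  · simp at htrue
  · have hv := hprefix v (by simp)
    cases b
    · simpa using htrue
    · simp only [List.concat_eq_append, List.count_append, List.count_singleton] at htrue hfalse
      grind

theorem head?_of_isDyckWord {n : ℕ} {w : List Bool} (hw : IsDyckWord (n + 1) w) :
    w.head? = some true := by
  obtain ⟨-, htrue, -, hprefix⟩ := hw
  cases w with
  | nil => simp at htrue
  | cons b w =>
    have hb := hprefix [b] (by simp)
    cases b <;> simp_all

theorem exists_dyckWord_eq_of_isDyckWord {n : ℕ} {w : List Bool} (hw : IsDyckWord (n + 1) w) :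
    ∃ l : List (Bool × Bool),
      l.length = n ∧ l.countP Prod.fst = l.countP Prod.snd ∧ dyckWord l = w := by
  obtain ⟨v, rfl, hv⟩ := exists_append_false_of_isDyckWord hw
  have hmem : true ∈ v := List.count_pos_iff.1 (by omega)
  obtain ⟨b, x, y, e, h⟩ := exists_append_false_eq_interlace hmem
  have hhead := head?_of_isDyckWord hw
  rw [e, head?_interlace, Option.some.injEq] at hhead
  subst hhead
  have hcount := count_interlace true x y
  rw [← e, hw.2.1, Bool.not_true, hw.2.2.1] at hcount
  have hxy : x.length = y.length := by omega
  have hfst : (x.zip y).map Prod.fst = x := List.map_fst_zip hxy.le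
  have hsnd : (x.zip y).map Prod.snd = y := List.map_snd_zip hxy.ge
  refine ⟨x.zip y, by grind, ?_, by rw [dyckWord, hfst, hsnd, e]⟩
  rwa [← compatible_map, hfst, hsnd]

theorem bijOn_dyckWord (n : ℕ) :
    Set.BijOn dyckWord {l | l.length = n ∧ IsBicoloredMotzkin l} {w | IsDyckWord (n + 1) w} := by
  refine ⟨?_, ?_, fun w hw => ?_⟩
  · rintro l ⟨rfl, hc, hprefix⟩
    exact (isDyckWord_dyckWord_iff hc).2 hprefix
  · rintro l ⟨-, hc, -⟩ l' ⟨-, hc', -⟩ h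
    obtain ⟨hfst, hsnd⟩ := interlace_injective (compatible_map.2 hc) (compatible_map.2 hc') h
    rw [← List.zip_unzip l, ← List.zip_unzip l', List.unzip_eq_map, List.unzip_eq_map, hfst, hsnd]
  · obtain ⟨l, rfl, hc, rfl⟩ := exists_dyckWord_eq_of_isDyckWord hw
    exact ⟨l, ⟨rfl, hc, (isDyckWord_dyckWord_iff hc).1 hw⟩, rfl⟩

theorem rStat_dyckWord {i : ℕ} (hi : i < l.length) :
    rStat (dyckWord l) (i + 1) =
      if l[i].1 then (runLengths (l.map Prod.snd)).getD ((l.take i).countP Prod.fst) 0 else 0 := by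
  have h := ((hasGap_interlace true (l.map Prod.fst) (l.map Prod.snd) i).1 (by simpa)).rStat_eq
  simpa [dyckWord, hi, ← List.map_take, count_true_map] using h

theorem sStat_dyckWord {i : ℕ} (hi : i < l.length) :
    sStat (dyckWord l) (i + 1) =
      if l[i].2 then (runLengths (l.map Prod.fst)).getD ((l.take i).countP Prod.snd + 1) 0
      else 0 := by
  have h := ((hasGap_interlace true (l.map Prod.fst) (l.map Prod.snd) i).2 (by simpa)).sStat_eq
  simpa [dyckWord, hi, ← List.map_take, count_true_map] using h

end DyckWord

/-- The reflection of a lattice path in a vertical line. -/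
def mirror (l : List (Bool × Bool)) : List (Bool × Bool) :=
  (l.map Prod.swap).reverse

/-- The length of the run of up steps of the Dyck path that begins with `p` which is matched with
the down step added by the next step of the path. -/
def matchedRun (p : List (Bool × Bool)) : ℕ :=
  (runLengths (p.map Prod.snd)).getD (p.countP Prod.fst) 0

section Mirror

variable {p q l : List (Bool × Bool)}

@[simp]
theorem mirror_mirror (l : List (Bool × Bool)) : mirror (mirror l) = l := by
  simp [mirror]

@[simp]
theorem length_mirror (l : List (Bool × Bool)) : (mirror l).length = l.length := by
  simp [mirror]

theorem mirror_append (p q : List (Bool × Bool)) : mirror (p ++ q) = mirror q ++ mirror p := by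
  simp [mirror]

theorem countP_fst_mirror (l : List (Bool × Bool)) :
    (mirror l).countP Prod.fst = l.countP Prod.snd := by
  simp [mirror, List.countP_map, Function.comp_def]

theorem countP_snd_mirror (l : List (Bool × Bool)) :
    (mirror l).countP Prod.snd = l.countP Prod.fst := by
  simp [mirror, List.countP_map, Function.comp_def]

@[simp]
theorem true_true_mem_mirror : (true, true) ∈ mirror l ↔ (true, true) ∈ l := by
  simp [mirror]

theorem IsMotzkinPrefix.countP_le (h : IsMotzkinPrefix l) :
    l.countP Prod.fst ≤ l.countP Prod.snd :=
  h l List.prefix_rfl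

theorem isMotzkinPrefix_append_mirror_iff
    (h : p.countP Prod.fst + q.countP Prod.snd = p.countP Prod.snd + q.countP Prod.fst) :
    IsMotzkinPrefix (p ++ mirror q) ↔ IsMotzkinPrefix p ∧ IsMotzkinPrefix q := by
  refine forall_prefix_append.trans (and_congr_right' ⟨fun H u hu => ?_, fun H u hu => ?_⟩)
  · obtain ⟨v, rfl⟩ := hu
    have hv := H (mirror v) (by simp [mirror_append])
    simp only [List.countP_append, countP_fst_mirror, countP_snd_mirror] at h hv
    omega
  · obtain ⟨v, hv⟩ := hu
    obtain rfl : q = mirror v ++ mirror u := by rw [← mirror_append, hv, mirror_mirror]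
    have hv := H (mirror v) (by simp)
    simp only [List.countP_append, countP_fst_mirror, countP_snd_mirror] at h hv ⊢
    omega

theorem isBicoloredMotzkin_append_mirror_iff :
    IsBicoloredMotzkin (p ++ mirror q) ↔
      p.countP Prod.fst + q.countP Prod.snd = p.countP Prod.snd + q.countP Prod.fst ∧
        IsMotzkinPrefix p ∧ IsMotzkinPrefix q := by
  rw [IsBicoloredMotzkin, List.countP_append, List.countP_append, countP_fst_mirror,
    countP_snd_mirror]
  exact and_congr_right isMotzkinPrefix_append_mirror_iff

theorem isMotzkinPrefix_append_level_iff {a : Bool} :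
    IsMotzkinPrefix (p ++ [(a, a)]) ↔ IsMotzkinPrefix p := by
  refine forall_prefix_append.trans (and_iff_left_of_imp fun h => ?_)
  cases a <;> simpa [forall_prefix_cons] using h p List.prefix_rfl

theorem isBicoloredMotzkin_append_cons_mirror_iff :
    IsBicoloredMotzkin (p ++ (true, true) :: mirror q) ↔ IsBicoloredMotzkin (p ++ mirror q) := by
  have h : (true, true) :: mirror q = mirror (q ++ [(true, true)]) := by simp [mirror]
  rw [h, isBicoloredMotzkin_append_mirror_iff, isBicoloredMotzkin_append_mirror_iff,
    isMotzkinPrefix_append_level_iff]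
  simp [← add_assoc]

end Mirror

section LevelSteps

variable {p q l : List (Bool × Bool)}

theorem rStat_dyckWord_append_cons (hp : p.countP Prod.fst ≤ p.countP Prod.snd) :
    rStat (dyckWord (p ++ (true, true) :: l)) (p.length + 1) = matchedRun p := by
  rw [rStat_dyckWord (by simp), List.map_append, List.map_cons, runLengths_append_true_cons,
    List.getD_append _ _ _ _ (by simpa [length_runLengths, count_true_map, Nat.lt_succ_iff])]
  simp [matchedRun]

theorem sStat_dyckWord_append_cons (h : IsBicoloredMotzkin (p ++ mirror q)) :
    sStat (dyckWord (p ++ (true, true) :: mirror q)) (p.length + 1) = matchedRun q := by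
  obtain ⟨h, hp, -⟩ := isBicoloredMotzkin_append_mirror_iff.1 h
  have hheight := hp.countP_le
  have hmirror : (mirror q).map Prod.fst = (q.map Prod.snd).reverse := by simp [mirror]
  have hlength : (runLengths (p.map Prod.fst)).length = p.countP Prod.fst + 1 := by
    rw [length_runLengths, count_true_map]
  have hindex : p.countP Prod.snd + 1 - (p.countP Prod.fst + 1) + q.countP Prod.fst + 1 =
      (runLengths (q.map Prod.snd)).length := by
    rw [length_runLengths, count_true_map]
    omega
  rw [sStat_dyckWord (by simp), List.map_append, List.map_cons, runLengths_append_true_cons,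
    List.take_left' rfl, List.getD_append_right _ _ _ _ (by omega), hlength, hmirror,
    runLengths_reverse, List.getD_eq_getElem?_getD, List.getElem?_reverse' hindex]
  simp [matchedRun]

theorem rStat_eq_zero_or_sStat_eq_zero_iff (hl : l.countP Prod.fst = l.countP Prod.snd) {i : ℕ}
    (hi : i < l.length) :
    rStat (dyckWord l) (i + 1) = 0 ∨ sStat (dyckWord l) (i + 1) = 0 ↔ l[i] ≠ (true, true) := by
  have htake : (l.take i).countP Prod.fst ≤ l.countP Prod.snd :=
    hl ▸ (List.take_sublist i l).countP_le
  have hr : 0 < (runLengths (l.map Prod.snd)).getD ((l.take i).countP Prod.fst) 0 := by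
    rwa [getD_runLengths_pos, count_true_map]
  have hs (h : l[i].2 = true) :
      0 < (runLengths (l.map Prod.fst)).getD ((l.take i).countP Prod.snd + 1) 0 := by
    rw [getD_runLengths_pos, count_true_map, hl]
    have htake_succ := (List.take_sublist (i + 1) l).countP_le (p := Prod.snd)
    rwa [List.take_succ_eq_append_getElem hi, List.countP_append,
      List.countP_singleton, if_pos h] at htake_succ
  rw [rStat_dyckWord hi, sStat_dyckWord hi, ite_eq_right_iff, ite_eq_right_iff, Ne, Prod.ext_iff,
    not_and_or]
  exact or_congr (forall_congr' fun _ => iff_false_intro hr.ne')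
    (forall_congr' fun h => iff_false_intro (hs h).ne')

theorem forall_getElem_append_cons_ne_iff {α : Type*} {a b : α} {k m : List α} :
    (∀ j (hj : j < (k ++ b :: m).length), j ≠ k.length → (k ++ b :: m)[j] ≠ a) ↔
      a ∉ k ++ m := by
  refine ⟨fun h ha => ?_, fun h j hj hne => ?_⟩
  · rcases List.mem_append.1 ha with ha | ha <;> obtain ⟨j, hj, rfl⟩ := List.getElem_of_mem ha
    · exact h j (by grind) hj.ne (List.getElem_append_left hj)
    · exact h (k.length + (j + 1)) (by simpa) (by omega) (by simp)
  · grind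

theorem LStat_dyckWord_eq_two_iff (hl : IsBicoloredMotzkin l) :
    LStat (l.length + 1) (dyckWord l) = 2 ↔
      ∃ p q, p ++ (true, true) :: mirror q = l ∧ (true, true) ∉ p ++ mirror q ∧
        matchedRun p = 1 ∧ matchedRun q = 1 := by
  have hlevel : ∀ j, ∀ hj : j < l.length,
      rStat (dyckWord l) (j + 1) = 0 ∨ sStat (dyckWord l) (j + 1) = 0 ↔ l[j] ≠ (true, true) :=
    fun j hj => rStat_eq_zero_or_sStat_eq_zero_iff hl.1 hj
  rw [LStat_succ_eq_two_iff]
  constructor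
  · rintro ⟨i, hi, ⟨hr, hs⟩, hne⟩
    have hi_level : l[i] = (true, true) := by
      simpa [hr, hs] using hlevel i hi
    obtain ⟨p, q, rfl, rfl⟩ : ∃ p q, p ++ (true, true) :: mirror q = l ∧ p.length = i :=
      ⟨l.take i, mirror (l.drop (i + 1)), by
        rw [mirror_mirror, ← hi_level, List.cons_getElem_drop_succ, List.take_append_drop],
        List.length_take_of_le hi.le⟩
    have hpq := isBicoloredMotzkin_append_cons_mirror_iff.1 hl
    rw [rStat_dyckWord_append_cons (isBicoloredMotzkin_append_mirror_iff.1 hpq).2.1.countP_le] at hr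
    rw [sStat_dyckWord_append_cons hpq] at hs
    exact ⟨p, q, rfl, forall_getElem_append_cons_ne_iff.1 fun j hj hjp =>
      (hlevel j hj).1 (hne j hj hjp), hr, hs⟩
  · rintro ⟨p, q, rfl, hne, hp, hq⟩
    have hpq := isBicoloredMotzkin_append_cons_mirror_iff.1 hl
    refine ⟨p.length, by simp, ⟨?_, ?_⟩, fun j hj hjp =>
      (hlevel j hj).2 (forall_getElem_append_cons_ne_iff.2 hne j hj hjp)⟩
    · rwa [rStat_dyckWord_append_cons (isBicoloredMotzkin_append_mirror_iff.1 hpq).2.1.countP_le]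
    · rwa [sStat_dyckWord_append_cons hpq]

end LevelSteps

/-- Insert an up step into `l` right after the `j`-th up step. -/
def insertUp : ℕ → List (Bool × Bool) → List (Bool × Bool)
  | 0, l => (false, true) :: l
  | _ + 1, [] => [(false, true)]
  | j + 1, a :: l => a :: insertUp (if a.2 then j else j + 1) l

/-- Insert an up step into the path `l` right after its `j`-th up step, `j` being the number of down
steps, so that `matchedRun` becomes `1`. -/
def raise (l : List (Bool × Bool)) : List (Bool × Bool) :=
  insertUp (l.countP Prod.fst) l

section Raise

variable {l : List (Bool × Bool)} {j : ℕ}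

theorem exists_insertUp_eq (j : ℕ) (l : List (Bool × Bool)) :
    ∃ u v, l = u ++ v ∧ insertUp j l = u ++ (false, true) :: v ∧
      (j ≤ u.countP Prod.snd ∨ v = []) := by
  induction j, l using insertUp.induct with
  | case1 l => exact ⟨[], l, rfl, by simp [insertUp]⟩
  | case2 j => exact ⟨[], [], rfl, by simp [insertUp]⟩
  | case3 j a l ih =>
    obtain ⟨u, v, rfl, h, huv⟩ := ih
    refine ⟨a :: u, v, rfl, by simp only [insertUp, h, List.cons_append], huv.imp_left ?_⟩
    rcases a with ⟨_, _ | _⟩ <;> simp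

theorem insertUp_perm (j : ℕ) (l : List (Bool × Bool)) :
    (insertUp j l).Perm ((false, true) :: l) := by
  obtain ⟨u, v, rfl, h, -⟩ := exists_insertUp_eq j l
  exact h ▸ List.perm_middle

theorem insertUp_injective (j : ℕ) : Function.Injective (insertUp j) := by
  intro l l' h
  have hlength : l.length = l'.length := by
    simpa [(insertUp_perm j _).length_eq] using congrArg List.length h
  induction l generalizing j l' with
  | nil => exact (List.length_eq_zero_iff.1 hlength.symm).symm
  | cons a l ih =>
    obtain ⟨a', l', rfl⟩ := List.exists_cons_of_length_eq_add_one hlength.symm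
    rcases j with _ | j
    · exact (List.cons.inj h).2
    · obtain ⟨rfl, h⟩ := List.cons.inj h
      rw [ih _ h (by simpa using hlength)]

theorem countP_fst_raise (l : List (Bool × Bool)) :
    (raise l).countP Prod.fst = l.countP Prod.fst := by
  simp [raise, (insertUp_perm _ l).countP_eq]

theorem countP_snd_raise (l : List (Bool × Bool)) :
    (raise l).countP Prod.snd = l.countP Prod.snd + 1 := by
  simp [raise, (insertUp_perm _ l).countP_eq]

theorem length_raise (l : List (Bool × Bool)) : (raise l).length = l.length + 1 :=
  (insertUp_perm _ l).length_eq

theorem true_true_mem_raise : (true, true) ∈ raise l ↔ (true, true) ∈ l := by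
  simp [raise, (insertUp_perm _ l).mem_iff]

theorem raise_injective : Function.Injective raise := by
  intro l l' h
  have hcount : l.countP Prod.fst = l'.countP Prod.fst := by
    rw [← countP_fst_raise l, h, countP_fst_raise]
  rw [raise, raise, hcount] at h
  exact insertUp_injective _ h

theorem isMotzkinPrefix_raise_iff : IsMotzkinPrefix (raise l) ↔ IsMotzkinPrefix l := by
  obtain ⟨u, v, hl, h, huv⟩ := exists_insertUp_eq (l.countP Prod.fst) l
  rw [raise, h, hl]
  have hv : (∀ r, r <+: (false, true) :: v →
      (u ++ r).countP Prod.fst ≤ (u ++ r).countP Prod.snd) ↔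
      ∀ r, r <+: v → (u ++ r).countP Prod.fst ≤ (u ++ r).countP Prod.snd := by
    rcases huv with huv | rfl
    · have hle {r} (hr : r <+: v) : u.countP Prod.fst + r.countP Prod.fst ≤ u.countP Prod.snd :=
        calc u.countP Prod.fst + r.countP Prod.fst
          _ = (u ++ r).countP Prod.fst := (List.countP_append ..).symm
          _ ≤ (u ++ v).countP Prod.fst :=
            ((List.prefix_append_right_inj u).2 hr).sublist.countP_le
          _ ≤ u.countP Prod.snd := hl ▸ huv
      simp only [forall_prefix_cons, List.countP_append]
      refine iff_of_true ⟨?_, fun r hr => ?_⟩ fun r hr => ?_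
      · simpa using hle List.nil_prefix
      · rw [List.countP_cons_of_neg (by simp), List.countP_cons_of_pos (by simp)]
        have := hle hr
        omega
      · have := hle hr
        omega
    · simp +contextual [forall_prefix_cons, Nat.le_succ_of_le]
  exact forall_prefix_append.trans ((and_congr_right' hv).trans forall_prefix_append.symm)

theorem getD_runLengths_cons_zero_eq_one_iff {a : Bool} {k : List Bool} :
    (runLengths (a :: k)).getD 0 0 = 1 ↔ a = true := by
  obtain ⟨m, R, hR⟩ := exists_runLengths_eq_cons k
  have hm : 0 < (runLengths k).getD 0 0 := getD_runLengths_pos.2 (Nat.zero_le _)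
  rw [hR, List.getD_cons_zero] at hm
  cases a <;> simp [runLengths, hR, hm.ne']

theorem getD_runLengths_cons_succ (a : Bool) (k : List Bool) (j : ℕ) :
    (runLengths (a :: k)).getD (j + 1) 0 = (runLengths k).getD (if a then j else j + 1) 0 := by
  obtain ⟨m, R, hR⟩ := exists_runLengths_eq_cons k
  cases a <;> simp [runLengths, hR]

theorem exists_insertUp_succ_eq_cons_iff {a : Bool × Bool} (hl : l ≠ []) :
    (∃ k, insertUp (j + 1) k = a :: l) ↔ ∃ k, insertUp (if a.2 then j else j + 1) k = l := by
  refine ⟨fun ⟨k, hk⟩ => ?_, fun ⟨k, hk⟩ => ⟨a :: k, by rw [insertUp, hk]⟩⟩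
  rcases k with _ | ⟨b, k⟩
  · exact absurd (List.cons.inj hk).2.symm hl
  · obtain ⟨rfl, htail⟩ := List.cons.inj hk
    exact ⟨k, htail⟩

theorem getD_runLengths_eq_one_iff (hl : (true, true) ∉ l) (hj : j < l.countP Prod.snd) :
    (runLengths (l.map Prod.snd)).getD j 0 = 1 ↔ ∃ k, insertUp j k = l := by
  induction l generalizing j with
  | nil => simp at hj
  | cons a l ih =>
    rw [List.mem_cons, not_or] at hl
    rw [List.map_cons]
    rcases j with _ | j
    · rw [getD_runLengths_cons_zero_eq_one_iff]
      rcases a with ⟨_ | _, _ | _⟩ <;> simp_all [insertUp]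
    · have hj' : (if a.2 then j else j + 1) < l.countP Prod.snd := by
        rw [List.countP_cons] at hj
        split_ifs at hj ⊢ <;> omega
      rw [getD_runLengths_cons_succ, ih hl.2 hj',
        exists_insertUp_succ_eq_cons_iff (by rintro rfl; simp at hj')]

theorem matchedRun_eq_one_iff_of_lt (hl : (true, true) ∉ l)
    (h : l.countP Prod.fst < l.countP Prod.snd) : matchedRun l = 1 ↔ ∃ k, raise k = l := by
  rw [matchedRun, getD_runLengths_eq_one_iff hl h]
  refine exists_congr fun k => ⟨fun hk => ?_, ?_⟩
  · have hcount : k.countP Prod.fst = l.countP Prod.fst := by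
      simpa [hk] using ((insertUp_perm (l.countP Prod.fst) k).countP_eq Prod.fst).symm
    rwa [raise, hcount]
  · rintro rfl
    rw [countP_fst_raise, raise]

theorem one_lt_getD_runLengths_append_false (k : List Bool) :
    1 < (runLengths (k ++ [false])).getD (k.count true) 0 := by
  induction k with
  | nil => simp [runLengths]
  | cons a k ih =>
    obtain ⟨m, R, hR⟩ := exists_runLengths_eq_cons (k ++ [false])
    rw [hR] at ih
    cases a
    · cases hk : k.count true with
      | zero => simpa [runLengths, hR, hk] using (Nat.lt_succ_of_lt ih)
      | succ n => simpa [runLengths, hR, hk] using ih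
    · simpa [runLengths, hR] using ih

theorem matchedRun_eq_one_iff_of_eq (hl : (true, true) ∉ l) (hprefix : IsMotzkinPrefix l)
    (h : l.countP Prod.fst = l.countP Prod.snd) : matchedRun l = 1 ↔ l = [] := by
  rcases l.eq_nil_or_concat' with rfl | ⟨k, a, rfl⟩
  · simp [matchedRun, runLengths]
  · have hk := hprefix k (by simp)
    have ha : a.2 = false := by
      rcases a with ⟨_ | _, _ | _⟩ <;> simp_all
    have hlast := one_lt_getD_runLengths_append_false (k.map Prod.snd)
    have hindex : (k ++ [a]).countP Prod.fst = (k.map Prod.snd).count true := by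
      rw [h, count_true_map]
      simp [ha]
    rw [matchedRun, hindex, List.map_append, List.map_singleton, ha]
    simp [-List.getD_eq_getElem?_getD, hlast.ne']

end Raise

/-- The step of a bicolored Motzkin path that corresponds to a step of a Motzkin path; the level
step `(true, true)` is not used. -/
def toStep : Option Bool → Bool × Bool
  | none => (false, false)
  | some b => (!b, b)

/-- Motzkin paths of length `n` cut into two pieces, the second of which is mirrored. -/
def cutPaths (n : ℕ) : Set (List (Bool × Bool) × List (Bool × Bool)) :=
  {z | z.1.length + z.2.length = n ∧ IsBicoloredMotzkin (z.1 ++ mirror z.2) ∧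
    (true, true) ∉ z.1 ++ mirror z.2}

section CutPaths

theorem toStep_injective : Function.Injective toStep := by
  rintro (_ | _ | _) (_ | _ | _) <;> simp [toStep]

theorem range_toStep : Set.range toStep = {(true, true)}ᶜ := by
  ext ⟨r, s⟩
  simp only [Set.mem_range, Option.exists, toStep, Set.mem_compl_singleton_iff]
  cases r <;> cases s <;> simp

theorem isBicoloredMotzkin_map_toStep_iff {v : List (Option Bool)} :
    IsBicoloredMotzkin (v.map toStep) ↔ IsMotzkinWord v := by
  have hfst (v : List (Option Bool)) : (v.map toStep).countP Prod.fst = v.count (some false) := by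
    rw [List.countP_map, List.count]
    congr
    ext (_ | _ | _) <;> rfl
  have hsnd (v : List (Option Bool)) : (v.map toStep).countP Prod.snd = v.count (some true) := by
    rw [List.countP_map, List.count]
    congr
    ext (_ | _ | _) <;> rfl
  refine and_congr (by rw [hfst, hsnd])
    ⟨fun h p hp => by simpa [hfst, hsnd] using h _ (hp.map toStep), fun h r hr => ?_⟩
  obtain ⟨p, hp, rfl⟩ := List.prefix_map_iff.1 hr
  rw [hfst, hsnd]
  exact h p hp

theorem bijOn_map_toStep (n : ℕ) :
    Set.BijOn (List.map toStep) {v | v.length = n ∧ IsMotzkinWord v}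
      {l | l.length = n ∧ IsBicoloredMotzkin l ∧ (true, true) ∉ l} := by
  refine ⟨?_, (List.map_injective_iff.2 toStep_injective).injOn, ?_⟩
  · rintro v ⟨rfl, hv⟩
    refine ⟨by simp, isBicoloredMotzkin_map_toStep_iff.2 hv, fun h => ?_⟩
    obtain ⟨a, -, ha⟩ := List.mem_map.1 h
    exact (range_toStep ▸ Set.mem_range_self a : toStep a ∈ ({(true, true)}ᶜ : Set _)) ha
  · rintro l ⟨rfl, hl, hne⟩
    obtain ⟨v, rfl⟩ : l ∈ Set.range (List.map toStep) := by
      rw [Set.range_list_map, range_toStep]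
      exact fun a ha h => hne (h ▸ ha)
    exact ⟨v, ⟨by simp, isBicoloredMotzkin_map_toStep_iff.1 hl⟩, rfl⟩

theorem ncard_cutPaths (n : ℕ) : (cutPaths n).ncard = motzkin n * (n + 1) := by
  have hbij : Set.BijOn (fun z => (z.1 ++ mirror z.2, z.1.length)) (cutPaths n)
      ({l | l.length = n ∧ IsBicoloredMotzkin l ∧ (true, true) ∉ l} ×ˢ Set.Iic n) := by
    refine ⟨?_, ?_, ?_⟩
    · rintro ⟨p, q⟩ ⟨rfl, h⟩
      exact ⟨⟨by simp, h⟩, Nat.le_add_right _ _⟩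
    · rintro ⟨p, q⟩ - ⟨p', q'⟩ - h
      obtain ⟨h, hlength⟩ := Prod.mk.inj h
      obtain ⟨rfl, hq⟩ := List.append_inj h hlength
      rw [← mirror_mirror q, hq, mirror_mirror]
    · rintro ⟨l, i⟩ ⟨⟨rfl, h⟩, hi⟩
      have hi : i ≤ l.length := hi
      refine ⟨(l.take i, mirror (l.drop i)), ⟨by grind [length_mirror], by simpa using h⟩, ?_⟩
      simpa using hi
  rw [hbij.ncard_eq, Set.ncard_prod, ← (bijOn_map_toStep n).ncard_eq, motzkin]
  rw [Set.ncard_Iic_nat]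

theorem mem_cutPaths_iff {n : ℕ} {p q : List (Bool × Bool)} :
    (p, q) ∈ cutPaths n ↔ p.length + q.length = n ∧
      (p.countP Prod.fst + q.countP Prod.snd = p.countP Prod.snd + q.countP Prod.fst ∧
        IsMotzkinPrefix p ∧ IsMotzkinPrefix q) ∧ (true, true) ∉ p ∧ (true, true) ∉ q := by
  simp [cutPaths, isBicoloredMotzkin_append_mirror_iff]

theorem raise_mem_cutPaths_iff {n : ℕ} {p q : List (Bool × Bool)} :
    (raise p, raise q) ∈ cutPaths (n + 2) ↔ (p, q) ∈ cutPaths n := by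
  simp only [mem_cutPaths_iff, length_raise, countP_fst_raise, countP_snd_raise,
    isMotzkinPrefix_raise_iff, true_true_mem_raise]
  refine and_congr (by omega) (and_congr_left' (and_congr_left' (by omega)))

/-- The cut paths for which the step `(true, true)`, inserted at the cut, separates two runs of
length one. -/
def tightCutPaths (n : ℕ) : Set (List (Bool × Bool) × List (Bool × Bool)) :=
  {z ∈ cutPaths n | matchedRun z.1 = 1 ∧ matchedRun z.2 = 1}

theorem countP_lt_of_isMotzkinPrefix_raise {l : List (Bool × Bool)}
    (h : IsMotzkinPrefix (raise l)) :
    (raise l).countP Prod.fst < (raise l).countP Prod.snd := by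
  rw [countP_fst_raise, countP_snd_raise]
  exact Nat.lt_succ_of_le (isMotzkinPrefix_raise_iff.1 h).countP_le

theorem mem_tightCutPaths_iff {n : ℕ} {z : List (Bool × Bool) × List (Bool × Bool)} :
    z ∈ tightCutPaths n ↔
      z ∈ cutPaths n ∧ (z = ([], []) ∨ z ∈ Set.range (Prod.map raise raise)) := by
  obtain ⟨p, q⟩ := z
  refine and_congr_right fun h => ?_
  obtain ⟨-, ⟨hbalance, hp, hq⟩, hp', hq'⟩ := mem_cutPaths_iff.1 h
  rw [Set.range_prodMap, Set.mem_prod, Set.mem_range, Set.mem_range, Prod.mk.injEq]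
  rcases hp.countP_le.lt_or_eq with hlt | heq
  · rw [matchedRun_eq_one_iff_of_lt hp' hlt, matchedRun_eq_one_iff_of_lt hq' (by omega),
      or_iff_right]
    rintro ⟨rfl, -⟩
    simp at hlt
  · rw [matchedRun_eq_one_iff_of_eq hp' hp heq, matchedRun_eq_one_iff_of_eq hq' hq (by omega),
      or_iff_left]
    rintro ⟨⟨k, rfl⟩, -⟩
    exact (countP_lt_of_isMotzkinPrefix_raise hp).ne heq

theorem tightCutPaths_zero : tightCutPaths 0 = {([], [])} := by
  ext ⟨p, q⟩
  rw [mem_tightCutPaths_iff, mem_cutPaths_iff]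
  constructor
  · rintro ⟨⟨h, -⟩, -⟩
    simp_all
  · rintro h
    obtain ⟨rfl, rfl⟩ := Prod.mk.inj h
    simp [IsMotzkinPrefix]

theorem tightCutPaths_one : tightCutPaths 1 = ∅ := by
  refine Set.eq_empty_of_forall_notMem fun z hz => ?_
  rcases mem_tightCutPaths_iff.1 hz with ⟨⟨h, -⟩, rfl | ⟨y, rfl⟩⟩
  · exact Nat.zero_ne_one h
  · simp only [Prod.map_fst, Prod.map_snd, length_raise] at h
    omega

theorem tightCutPaths_add_two (n : ℕ) :
    tightCutPaths (n + 2) = Prod.map raise raise '' cutPaths n := by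
  ext z
  rw [mem_tightCutPaths_iff]
  constructor
  · rintro ⟨h, rfl | ⟨y, rfl⟩⟩
    · simp [cutPaths] at h
    · exact ⟨y, raise_mem_cutPaths_iff.1 h, rfl⟩
  · rintro ⟨y, hy, rfl⟩
    exact ⟨raise_mem_cutPaths_iff.2 hy, Or.inr ⟨y, rfl⟩⟩

theorem bijOn_dyckL_two (n : ℕ) :
    Set.BijOn (fun z => dyckWord (z.1 ++ (true, true) :: mirror z.2)) (tightCutPaths n)
      (dyckL (n + 2) 2) := by
  have hdyck := (bijOn_dyckWord (n + 1)).subset_right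
    (r := dyckL (n + 2) 2) (fun _ hw => hw.1)
  refine hdyck.comp ⟨?_, ?_, ?_⟩
  · rintro ⟨p, q⟩ ⟨⟨rfl, hpq, hne⟩, hp, hq⟩
    have hl := isBicoloredMotzkin_append_cons_mirror_iff.2 hpq
    have hlength : (p ++ (true, true) :: mirror q).length = p.length + q.length + 1 := by
      simp [add_assoc]
    have hL := (LStat_dyckWord_eq_two_iff hl).2 ⟨p, q, rfl, hne, hp, hq⟩
    rw [hlength] at hL
    exact ⟨⟨hlength, hl⟩, (bijOn_dyckWord _).mapsTo ⟨hlength, hl⟩, hL⟩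
  · rintro ⟨p, q⟩ ⟨⟨-, -, hpq⟩, -⟩ ⟨p', q'⟩ - h
    rw [List.mem_append, not_or] at hpq
    have h : p ++ (true, true) :: mirror q = p' ++ (true, true) :: mirror q' := h
    obtain ⟨rfl, -, hq⟩ := (List.append_cons_inj_of_notMem hpq.1 hpq.2).1 h
    rw [← mirror_mirror q, hq, mirror_mirror]
  · rintro l ⟨⟨hlength, hl⟩, -, hL⟩
    have hL : LStat (l.length + 1) (dyckWord l) = 2 := hlength ▸ hL
    obtain ⟨p, q, rfl, hne, hp, hq⟩ := (LStat_dyckWord_eq_two_iff hl).1 hL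
    refine ⟨(p, q), ⟨⟨?_, isBicoloredMotzkin_append_cons_mirror_iff.1 hl, hne⟩, hp, hq⟩, rfl⟩
    simpa [← add_assoc] using hlength

theorem ncard_dyckL_two_two : (dyckL 2 2).ncard = 1 := by
  rw [← (bijOn_dyckL_two 0).ncard_eq, tightCutPaths_zero, Set.ncard_singleton]

theorem ncard_dyckL_add_four_two (n : ℕ) : (dyckL (n + 4) 2).ncard = motzkin n * (n + 1) := by
  rw [← (bijOn_dyckL_two (n + 2)).ncard_eq, tightCutPaths_add_two,
    Set.ncard_image_of_injective _ (raise_injective.prodMap raise_injective), ncard_cutPaths]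

theorem dyckL_two_eq_empty {n : ℕ} (hn : n < 4) (h : n ≠ 2) : dyckL n 2 = ∅ := by
  obtain hn | rfl : n < 2 ∨ n = 3 := by omega
  · refine Set.eq_empty_of_forall_notMem fun w hw => ?_
    have hL : LStat n w = 1 := by
      rw [LStat, Finset.Icc_eq_empty (by omega), Finset.prod_empty]
    exact absurd (hL.symm.trans hw.2) (by decide)
  · rw [← (bijOn_dyckL_two 1).image_eq, tightCutPaths_one, Set.image_empty]

end CutPaths

end BicoloredMotzkin

open PowerSeries in
/-- **Theorem (generating function for L = 2).**
`L₂(x) = Σ |𝒟ₙ²| xⁿ = x² + x⁴·(x·m(x))′`. -/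
theorem dyck_L_eq_two_gf :
    PowerSeries.mk (fun n => ((dyckL n 2).ncard : ℚ)) =
      X ^ 2 + X ^ 4 * PowerSeries.derivative ℚ (X * motzkinGF) := by
  ext n
  rw [coeff_mk, map_add, coeff_X_pow]
  rcases lt_or_ge n 4 with hn | hn
  · rw [coeff_X_pow_mul', if_neg (Nat.not_le.2 hn), add_zero]
    split_ifs with h2
    · rw [h2, BicoloredMotzkin.ncard_dyckL_two_two, Nat.cast_one]
    · rw [BicoloredMotzkin.dyckL_two_eq_empty hn h2, Set.ncard_empty, Nat.cast_zero]
  · obtain ⟨N, rfl⟩ := Nat.exists_eq_add_of_le' hn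
    rw [BicoloredMotzkin.ncard_dyckL_add_four_two, if_neg (by omega), zero_add, coeff_X_pow_mul,
      coeff_derivative, coeff_succ_X_mul, motzkinGF, coeff_mk]
    push_cast
    rfl
end
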